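/- Let Ω ⊂ ℝⁿ be a bounded smooth convex domain, β > 0, and u a Robin eigenfunction: Δu + ηu = 0 in Ω, ∂_ν u + βu = 0 on ∂Ω, normalized with ∫_Ω u² = 1. Then ∫_Ω |D²u|² ≤ η². -/

import Mathlib

open MeasureTheory Metric Set Filter
open scoped RealInnerProductSpace

/-- The Laplacian of `u : ℝⁿ → ℝ` at `x`. -/
noncomputable def lap {n : ℕ} (u : EuclideanSpace ℝ (Fin n) → ℝ)
    (x : EuclideanSpace ℝ (Fin n)) : ℝ :=
  ∑ i : Fin n, fderiv ℝ (fun y => fderiv ℝ u y (EuclideanSpace.single i 1)) x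
    (EuclideanSpace.single i 1)

/-- The squared Hilbert–Schmidt norm `|D²u|² = Σ_{i,j} (∂²_{ij} u)²` of the Hessian. -/
noncomputable def hessSq {n : ℕ} (u : EuclideanSpace ℝ (Fin n) → ℝ)
    (x : EuclideanSpace ℝ (Fin n)) : ℝ :=
  ∑ i : Fin n, ∑ j : Fin n,
    (fderiv ℝ (fun y => fderiv ℝ u y (EuclideanSpace.single i 1)) x
      (EuclideanSpace.single j 1)) ^ 2

/-- The tangential (boundary) gradient of `u` relative to the unit normal field `ν`. -/
noncomputable def tgrad {n : ℕ} (u : EuclideanSpace ℝ (Fin n) → ℝ)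
    (ν : EuclideanSpace ℝ (Fin n) → EuclideanSpace ℝ (Fin n))
    (x : EuclideanSpace ℝ (Fin n)) : EuclideanSpace ℝ (Fin n) :=
  gradient u x - ⟪gradient u x, ν x⟫ • ν x

/-- `Ω` has `C^∞` boundary: it is the sublevel set of a smooth defining function which
is regular on the boundary. -/
def HasSmoothBoundary {n : ℕ} (Ω : Set (EuclideanSpace ℝ (Fin n))) : Prop :=
  ∃ f : EuclideanSpace ℝ (Fin n) → ℝ, ContDiff ℝ (⊤ : ℕ∞) f ∧ Ω = {x | f x < 0} ∧
    ∀ x ∈ frontier Ω, fderiv ℝ f x ≠ 0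

section RobinBochner

open scoped ContDiff Convolution Topology

variable {n : ℕ}

local notation "𝔼" => EuclideanSpace ℝ (Fin n)

/-- The trace of an endomorphism of `ℝⁿ`, as the sum of its diagonal entries. -/
noncomputable def coordTrace (L : 𝔼 →L[ℝ] 𝔼) : ℝ :=
  ∑ i : Fin n, L (EuclideanSpace.single i 1) i

theorem sum_clm_single_mul (l : 𝔼 →L[ℝ] ℝ) (v : 𝔼) :
    ∑ i : Fin n, l (EuclideanSpace.single i 1) * v i = l v := by
  conv_rhs => rw [← (EuclideanSpace.basisFun (Fin n) ℝ).sum_repr v]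
  simp [map_sum, mul_comm]

theorem sum_clm_single_smul (L : 𝔼 →L[ℝ] 𝔼) (v : 𝔼) :
    ∑ i : Fin n, v i • L (EuclideanSpace.single i 1) = L v := by
  conv_rhs => rw [← (EuclideanSpace.basisFun (Fin n) ℝ).sum_repr v]
  simp [map_sum]

theorem fderiv_apply_coord {X : 𝔼 → 𝔼} {x : 𝔼} (hX : DifferentiableAt ℝ X x) (i : Fin n)
    (v : 𝔼) : fderiv ℝ (fun y => X y i) x v = fderiv ℝ X x v i := by
  have h := ((EuclideanSpace.proj (𝕜 := ℝ) i : 𝔼 →L[ℝ] ℝ).hasFDerivAt.comp x hX.hasFDerivAt).fderiv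
  have h2 : ((EuclideanSpace.proj (𝕜 := ℝ) i : 𝔼 →L[ℝ] ℝ) ∘ X) = fun y => X y i := rfl
  rw [h2] at h
  rw [h]; rfl

theorem integrable_of_contDiff_fderiv {g : 𝔼 → ℝ} (hg : ContDiff ℝ 1 g)
    (hc : HasCompactSupport g) (v : 𝔼) : Integrable (fun x => fderiv ℝ g x v) := by
  refine Continuous.integrable_of_hasCompactSupport
    ((hg.continuous_fderiv one_ne_zero).clm_apply continuous_const) ?_
  exact (hc.fderiv ℝ).comp_left (g := fun L : 𝔼 →L[ℝ] ℝ => L v) rfl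

theorem integral_fderiv_apply_eq_zero {g : 𝔼 → ℝ} (hg : ContDiff ℝ 1 g)
    (hc : HasCompactSupport g) (v : 𝔼) : ∫ x, fderiv ℝ g x v = 0 := by
  have h := integral_mul_fderiv_eq_neg_fderiv_mul_of_integrable (μ := (volume : Measure 𝔼))
    (f := fun _ => (1 : ℝ)) (g := g) (v := v) (by simp)
    (by simpa using integrable_of_contDiff_fderiv hg hc v)
    (by simpa using hg.continuous.integrable_of_hasCompactSupport hc)
    (fun x _ => differentiableAt_const _) (fun x _ => hg.differentiable one_ne_zero x)
  simpa using h

/-- The divergence theorem for a `C¹` field cut off by a compactly supported function. -/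
theorem integral_div_smul_eq_zero {ρ : 𝔼 → ℝ} {Y : 𝔼 → 𝔼} {V : Set 𝔼} (hV : IsOpen V)
    (hρ : ContDiff ℝ 1 ρ) (hc : HasCompactSupport ρ) (hs : tsupport ρ ⊆ V)
    (hY : ContDiffOn ℝ 1 Y V) :
    ∫ x, (fderiv ℝ ρ x (Y x) + ρ x * coordTrace (fderiv ℝ Y x)) = 0 := by
  have hX : ∀ i : Fin n, ContDiff ℝ 1 (fun x => ρ x * Y x i) := by
    intro i
    rw [contDiff_iff_contDiffAt]
    intro x
    by_cases hx : x ∈ tsupport ρ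
    · have h1 : ContDiffAt ℝ 1 Y x := hY.contDiffAt (hV.mem_nhds (hs hx))
      exact hρ.contDiffAt.mul (contDiffAt_euclidean.1 h1 i)
    · have : (fun x => ρ x * Y x i) =ᶠ[𝓝 x] fun _ => 0 := by
        filter_upwards [notMem_tsupport_iff_eventuallyEq.1 hx] with y hy
        simp [hy]
      exact contDiffAt_const.congr_of_eventuallyEq this
  have hXc : ∀ i : Fin n, HasCompactSupport (fun x => ρ x * Y x i) := fun i => hc.mul_right
  have key : ∀ x, fderiv ℝ ρ x (Y x) + ρ x * coordTrace (fderiv ℝ Y x)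
      = ∑ i : Fin n, fderiv ℝ (fun x => ρ x * Y x i) x (EuclideanSpace.single i 1) := by
    intro x
    by_cases hx : x ∈ tsupport ρ
    · have h1 : DifferentiableAt ℝ Y x :=
        (hY.contDiffAt (hV.mem_nhds (hs hx))).differentiableAt one_ne_zero
      have h2 : ∀ i : Fin n, fderiv ℝ (fun x => ρ x * Y x i) x (EuclideanSpace.single i 1)
          = ρ x * fderiv ℝ Y x (EuclideanSpace.single i 1) i
            + fderiv ℝ ρ x (EuclideanSpace.single i 1) * Y x i := by
        intro i
        rw [fderiv_fun_mul (hρ.differentiable one_ne_zero x)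
          (differentiableAt_euclidean.1 h1 i)]
        simp [fderiv_apply_coord h1, mul_comm]
      simp_rw [h2, Finset.sum_add_distrib, sum_clm_single_mul, coordTrace, Finset.mul_sum]
      ring
    · have h0 := notMem_tsupport_iff_eventuallyEq.1 hx
      have h1 : ρ x = 0 := h0.self_of_nhds
      have h2 : fderiv ℝ ρ x = 0 := by rw [h0.fderiv_eq]; simp
      have h3 : ∀ i : Fin n, fderiv ℝ (fun x => ρ x * Y x i) x = 0 := by
        intro i
        have : (fun x => ρ x * Y x i) =ᶠ[𝓝 x] fun _ => 0 := by
          filter_upwards [h0] with y hy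
          simp [hy]
        rw [this.fderiv_eq]; simp
      simp [h1, h2, h3]
  simp_rw [key]
  rw [integral_finsetSum _ fun i _ => integrable_of_contDiff_fderiv (hX i) (hXc i) _]
  exact Finset.sum_eq_zero fun i _ => integral_fderiv_apply_eq_zero (hX i) (hXc i) _

theorem fderiv_convolution_right_apply (L : ℝ →L[ℝ] ℝ →L[ℝ] ℝ) {f g : 𝔼 → ℝ}
    (hf : Continuous f) (hg : ContDiff ℝ 1 g) (hgc : HasCompactSupport g) (z c : 𝔼) :
    fderiv ℝ (f ⋆[L, volume] g) z c = (f ⋆[L, volume] fun x => fderiv ℝ g x c) z := by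
  rw [(hgc.hasFDerivAt_convolution_right L hf.locallyIntegrable hg z).fderiv,
    convolution_precompR_apply L hf.locallyIntegrable (hgc.fderiv ℝ)
      (hg.continuous_fderiv one_ne_zero)]

theorem fderiv_convolution_left_apply (L : ℝ →L[ℝ] ℝ →L[ℝ] ℝ) {f g : 𝔼 → ℝ}
    (hf : ContDiff ℝ 1 f) (hfc : HasCompactSupport f) (hg : Continuous g) (z c : 𝔼) :
    fderiv ℝ (f ⋆[L, volume] g) z c = ((fun x => fderiv ℝ f x c) ⋆[L, volume] g) z := by
  rw [← convolution_flip, ← convolution_flip (f := fun x => fderiv ℝ f x c)]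
  exact fderiv_convolution_right_apply L.flip hg hf hfc z c

/-- The null-Lagrangian identity: mixed products of first derivatives have equal integrals. -/
theorem integral_fderiv_mul_fderiv_comm {φ w : 𝔼 → ℝ} (hφ : ContDiff ℝ 1 φ)
    (hφc : HasCompactSupport φ) (hw : ContDiff ℝ 1 w) (hwc : HasCompactSupport w) (a b : 𝔼) :
    ∫ x, fderiv ℝ φ x a * fderiv ℝ w x b = ∫ x, fderiv ℝ φ x b * fderiv ℝ w x a := by
  let L := ContinuousLinearMap.mul ℝ ℝ
  let g : 𝔼 → ℝ := fun x => w (-x)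
  have hg : ContDiff ℝ 1 g := hw.comp contDiff_neg
  have hgc : HasCompactSupport g := hwc.comp_homeomorph (Homeomorph.neg 𝔼)
  have hfg : ∀ x v, fderiv ℝ g x v = - fderiv ℝ w (-x) v := by
    intro x v
    have h := (hw.differentiable one_ne_zero (-x)).hasFDerivAt.comp x
      (hasFDerivAt_id x).fun_neg
    have h2 : HasFDerivAt g _ x := h
    rw [h2.fderiv]; simp
  have hgd : ∀ c : 𝔼, Continuous fun x => fderiv ℝ g x c := fun c =>
    (hg.continuous_fderiv one_ne_zero).clm_apply continuous_const
  have hφd : ∀ c : 𝔼, Continuous fun x => fderiv ℝ φ x c := fun c =>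
    (hφ.continuous_fderiv one_ne_zero).clm_apply continuous_const
  have swap : (φ ⋆[L, volume] fun x => fderiv ℝ g x b)
      = ((fun x => fderiv ℝ φ x b) ⋆[L, volume] g) := by
    ext z
    rw [← fderiv_convolution_right_apply L hφ.continuous hg hgc,
      fderiv_convolution_left_apply L hφ hφc hg.continuous]
  have h := congrArg (fun F => fderiv ℝ F 0 a) swap
  rw [fderiv_convolution_left_apply L hφ hφc (hgd b),
    fderiv_convolution_right_apply L (hφd b) hg hgc] at h
  simp only [convolution_def, hfg, zero_sub, neg_neg, L, ContinuousLinearMap.mul_apply', mul_neg,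
    integral_neg, neg_inj] at h
  exact h

theorem exists_contDiff_hasCompactSupport_eq_near {K V : Set 𝔼} (hK : IsCompact K)
    (hV : IsOpen V) (hKV : K ⊆ V) {U : 𝔼 → 𝔼} (hU : ContDiffOn ℝ 1 U V) :
    ∃ W : 𝔼 → 𝔼, ContDiff ℝ 1 W ∧ HasCompactSupport W ∧ ∀ x ∈ K, W =ᶠ[𝓝 x] U := by
  obtain ⟨S, hS, hKS, hSV⟩ := exists_compact_between hK hV hKV
  obtain ⟨ζ, h1, h0, -⟩ := exists_contMDiffMap_one_nhds_of_subset_interior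
    (modelWithCornersSelf ℝ 𝔼) (n := 1) hK.isClosed hKS
  have hζ : ContDiff ℝ 1 ζ := ζ.contMDiff.contDiff
  have hts : tsupport ζ ⊆ S := closure_minimal
    (fun x hx => by by_contra hxS; exact hx (h0 x hxS)) hS.isClosed
  refine ⟨fun x => ζ x • U x, ?_, ?_, ?_⟩
  · rw [contDiff_iff_contDiffAt]
    intro x
    by_cases hx : x ∈ tsupport ζ
    · exact hζ.contDiffAt.smul (hU.contDiffAt (hV.mem_nhds (hSV (hts hx))))
    · have : (fun x => ζ x • U x) =ᶠ[𝓝 x] fun _ => 0 := by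
        filter_upwards [notMem_tsupport_iff_eventuallyEq.1 hx] with y hy
        simp [hy]
      exact contDiffAt_const.congr_of_eventuallyEq this
  · have : HasCompactSupport ζ := HasCompactSupport.of_support_subset_isCompact hS
      (subset_closure.trans hts)
    exact this.smul_right
  · intro x hx
    filter_upwards [Filter.eventually_iff.1 (eventually_nhdsSet_iff_forall.1 h1 x hx)] with y hy
    have hy : ζ y = 1 := hy
    simp [hy]

/-- A cut-off Bochner identity for `C¹` fields, `U = ∇u` being the case of interest. -/
theorem integral_cutoff_bochner {χ : 𝔼 → ℝ} {U : 𝔼 → 𝔼} {V : Set 𝔼} (hV : IsOpen V)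
    (hχ : ContDiff ℝ 1 χ) (hc : HasCompactSupport χ) (hs : tsupport χ ⊆ V)
    (hU : ContDiffOn ℝ 1 U V) :
    ∫ x, (χ x * (coordTrace (fderiv ℝ U x) ^ 2
        - ∑ i : Fin n, ∑ j : Fin n, fderiv ℝ U x (EuclideanSpace.single j 1) i
            * fderiv ℝ U x (EuclideanSpace.single i 1) j)
      + (fderiv ℝ χ x (U x) * coordTrace (fderiv ℝ U x)
        - fderiv ℝ χ x (fderiv ℝ U x (U x)))) = 0 := by
  obtain ⟨W, hW, hWc, hWU⟩ := exists_contDiff_hasCompactSupport_eq_near hc hV hs hU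
  have hX : ∀ i : Fin n, ContDiff ℝ 1 (fun x => χ x * U x i) := by
    intro i
    rw [contDiff_iff_contDiffAt]
    intro x
    by_cases hx : x ∈ tsupport χ
    · have h1 : ContDiffAt ℝ 1 U x := hU.contDiffAt (hV.mem_nhds (hs hx))
      exact hχ.contDiffAt.mul (contDiffAt_euclidean.1 h1 i)
    · have : (fun x => χ x * U x i) =ᶠ[𝓝 x] fun _ => 0 := by
        filter_upwards [notMem_tsupport_iff_eventuallyEq.1 hx] with y hy
        simp [hy]
      exact contDiffAt_const.congr_of_eventuallyEq this
  have hXc : ∀ i : Fin n, HasCompactSupport (fun x => χ x * U x i) := fun i => hc.mul_right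
  have hWi : ∀ i : Fin n, ContDiff ℝ 1 (fun x => W x i) := fun i => contDiff_euclidean.1 hW i
  have hWic : ∀ i : Fin n, HasCompactSupport (fun x => W x i) := fun i =>
    hWc.comp_left (g := fun v : 𝔼 => v i) rfl
  let e : Fin n → 𝔼 := fun i => EuclideanSpace.single i 1
  have hint : ∀ i j (a b : 𝔼), Integrable (fun x => fderiv ℝ (fun x => χ x * U x i) x a
      * fderiv ℝ (fun x => W x j) x b) := by
    intro i j a b
    refine Continuous.integrable_of_hasCompactSupport
      ((((hX i).continuous_fderiv one_ne_zero).clm_apply continuous_const).mul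
        (((hWi j).continuous_fderiv one_ne_zero).clm_apply continuous_const)) ?_
    exact (((hXc i).fderiv ℝ).comp_left (g := fun L : 𝔼 →L[ℝ] ℝ => L a) rfl).mul_right
  have key : ∀ x, (χ x * (coordTrace (fderiv ℝ U x) ^ 2
        - ∑ i : Fin n, ∑ j : Fin n, fderiv ℝ U x (EuclideanSpace.single j 1) i
            * fderiv ℝ U x (EuclideanSpace.single i 1) j)
      + (fderiv ℝ χ x (U x) * coordTrace (fderiv ℝ U x)
        - fderiv ℝ χ x (fderiv ℝ U x (U x))))
      = ∑ i : Fin n, ∑ j : Fin n, (fderiv ℝ (fun x => χ x * U x i) x (e i)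
          * fderiv ℝ (fun x => W x j) x (e j)
        - fderiv ℝ (fun x => χ x * U x i) x (e j) * fderiv ℝ (fun x => W x j) x (e i)) := by
    intro x
    by_cases hx : x ∈ tsupport χ
    · have h1 : DifferentiableAt ℝ U x :=
        (hU.contDiffAt (hV.mem_nhds (hs hx))).differentiableAt one_ne_zero
      have h2 : ∀ (i : Fin n) (v : 𝔼), fderiv ℝ (fun x => χ x * U x i) x v
          = χ x * fderiv ℝ U x v i + fderiv ℝ χ x v * U x i := by
        intro i v
        rw [fderiv_fun_mul (hχ.differentiable one_ne_zero x)
          (differentiableAt_euclidean.1 h1 i)]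
        simp [fderiv_apply_coord h1, mul_comm]
      have h3 : ∀ (i : Fin n) (v : 𝔼), fderiv ℝ (fun x => W x i) x v = fderiv ℝ U x v i := by
        intro i v
        rw [fderiv_apply_coord (hW.differentiable one_ne_zero x), (hWU x hx).fderiv_eq]
      simp_rw [h2, h3]
      set A := fderiv ℝ U x with hA
      have t1 : ∑ i, ∑ j, (χ x * A (e i) i * A (e j) j) = χ x * coordTrace A ^ 2 := by
        rw [coordTrace, sq, Finset.sum_mul_sum, Finset.mul_sum]
        simp_rw [Finset.mul_sum, mul_assoc]; rfl
      have t2 : ∑ i, ∑ j, (fderiv ℝ χ x (e i) * U x i * A (e j) j)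
          = fderiv ℝ χ x (U x) * coordTrace A := by
        rw [coordTrace, ← sum_clm_single_mul (fderiv ℝ χ x) (U x), Finset.sum_mul_sum]
      have t3 : ∑ i, ∑ j, (fderiv ℝ χ x (e j) * U x i * A (e i) j)
          = fderiv ℝ χ x (A (U x)) := by
        rw [Finset.sum_comm, ← sum_clm_single_mul (fderiv ℝ χ x) (A (U x)),
          ← sum_clm_single_smul A (U x)]
        refine Finset.sum_congr rfl fun j _ => ?_
        simp only [WithLp.ofLp_sum, Finset.sum_apply, PiLp.smul_apply, smul_eq_mul,
          Finset.mul_sum]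
        exact Finset.sum_congr rfl fun i _ => by simp only [e]; ring
      rw [← t2, ← t3, mul_sub, ← t1, Finset.mul_sum]
      simp_rw [Finset.mul_sum, ← Finset.sum_sub_distrib, ← Finset.sum_add_distrib]
      exact Finset.sum_congr rfl fun i _ => Finset.sum_congr rfl fun j _ => by
        simp only [e]; ring
    · have h0 := notMem_tsupport_iff_eventuallyEq.1 hx
      have h1 : χ x = 0 := h0.self_of_nhds
      have h2 : fderiv ℝ χ x = 0 := by rw [h0.fderiv_eq]; simp
      have h3 : ∀ i : Fin n, fderiv ℝ (fun x => χ x * U x i) x = 0 := by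
        intro i
        have : (fun x => χ x * U x i) =ᶠ[𝓝 x] fun _ => 0 := by
          filter_upwards [h0] with y hy
          simp [hy]
        rw [this.fderiv_eq]; simp
      simp [h1, h2, h3]
  simp_rw [key]
  have hsub : ∀ i j, Integrable (fun x => fderiv ℝ (fun x => χ x * U x i) x (e i)
      * fderiv ℝ (fun x => W x j) x (e j)
      - fderiv ℝ (fun x => χ x * U x i) x (e j) * fderiv ℝ (fun x => W x j) x (e i)) :=
    fun i j => (hint i j _ _).sub (hint i j _ _)
  rw [integral_finsetSum _ fun i _ => integrable_finsetSum _ fun j _ => hsub i j]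
  refine Finset.sum_eq_zero fun i _ => ?_
  rw [integral_finsetSum _ fun j _ => hsub i j]
  refine Finset.sum_eq_zero fun j _ => ?_
  rw [integral_sub (hint i j _ _) (hint i j _ _),
    integral_fderiv_mul_fderiv_comm (hX i) (hXc i) (hWi j) (hWic j), sub_self]

section Sublevel

variable {Ω : Set (EuclideanSpace ℝ (Fin n))} {f : EuclideanSpace ℝ (Fin n) → ℝ}
  {F : EuclideanSpace ℝ (Fin n) → EuclideanSpace ℝ (Fin n)}

theorem eq_zero_of_mem_frontier_sublevel (hf : Continuous f) (hΩ : Ω = {x | f x < 0}) {x : 𝔼}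
    (hx : x ∈ frontier Ω) : f x = 0 := by
  subst hΩ
  exact frontier_lt_subset_eq hf continuous_const hx

theorem eventually_add_smul_mem_sublevel (hF : ∀ x, HasFDerivAt f (innerSL ℝ (F x)) x)
    (hΩ : Ω = {x | f x < 0}) {x d : 𝔼} (hx : f x = 0) (hd : ⟪F x, d⟫ < 0) :
    ∀ᶠ t in 𝓝[>] (0 : ℝ), x + t • d ∈ Ω := by
  have h1 : HasDerivAt (fun t : ℝ => x + t • d) d 0 := by
    simpa using ((hasDerivAt_id (0 : ℝ)).smul_const d).const_add x
  have h2 : HasDerivAt (fun t : ℝ => f (x + t • d)) ⟪F x, d⟫ 0 := by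
    have h3 : HasFDerivAt f (innerSL ℝ (F x)) (x + (0 : ℝ) • d) := by simpa using hF x
    exact h3.comp_hasDerivAt (0 : ℝ) h1
  have h4 := (h2.hasDerivWithinAt (s := Ioi 0)).limsup_slope_le' (by simp) hd
  filter_upwards [h4, self_mem_nhdsWithin] with t ht ht0
  have ht0 : 0 < t := ht0
  simp only [slope_def_field, sub_zero, zero_smul, add_zero, hx] at ht
  rw [hΩ]
  have := (div_lt_iff₀ ht0).1 ht
  simpa using this

theorem unit_normal_eq (hF : ∀ x, HasFDerivAt f (innerSL ℝ (F x)) x)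
    (hΩ : Ω = {x | f x < 0}) {x v : 𝔼} (hx : f x = 0) (hFx : F x ≠ 0) (hv : ‖v‖ = 1)
    (hv' : ∀ y ∈ Ω, ⟪v, y - x⟫ ≤ 0) : ‖F x‖ • v = F x := by
  have hdir : ∀ d : 𝔼, ⟪F x, d⟫ < 0 → ⟪v, d⟫ ≤ 0 := by
    intro d hd
    obtain ⟨t, ht, ht0⟩ := ((eventually_add_smul_mem_sublevel hF hΩ hx hd).and
      self_mem_nhdsWithin).exists
    have ht0 : 0 < t := ht0
    have := hv' _ ht
    rw [add_sub_cancel_left, real_inner_smul_right] at this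
    nlinarith
  have hpos : 0 < ‖F x‖ := norm_pos_iff.2 hFx
  set m := ‖F x‖ with hm
  have hFF : ⟪F x, F x⟫ = m ^ 2 := real_inner_self_eq_norm_sq _
  have hvv : ⟪v, v⟫ = 1 := by rw [real_inner_self_eq_norm_sq, hv]; norm_num
  set c := ⟪F x, v⟫ with hc
  have hc0 : 0 ≤ c := by
    have := hdir (-(F x)) (by rw [inner_neg_right, hFF]; nlinarith)
    rw [inner_neg_right, real_inner_comm (F x) v] at this
    linarith
  have hκ : ∀ κ > 0, m ^ 2 - c ^ 2 ≤ κ * c := by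
    intro κ hκ
    have := hdir (m ^ 2 • v - (c + κ) • F x) (by
      rw [inner_sub_right, real_inner_smul_right, real_inner_smul_right, hFF]
      nlinarith [mul_pos hκ (sq_pos_of_pos hpos)])
    rw [inner_sub_right, real_inner_smul_right, real_inner_smul_right, hvv,
      real_inner_comm (F x) v] at this
    nlinarith
  have hc1 : m ^ 2 - c ^ 2 ≤ 0 := by
    by_contra! h
    have := hκ ((m ^ 2 - c ^ 2) / (2 * (c + 1))) (by positivity)
    have h2 : (m ^ 2 - c ^ 2) / (2 * (c + 1)) * c < m ^ 2 - c ^ 2 := by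
      rw [div_mul_eq_mul_div, div_lt_iff₀ (by positivity)]
      nlinarith
    linarith
  have hmc : m ≤ c := by nlinarith
  have : ‖m • v - F x‖ ^ 2 ≤ 0 := by
    rw [← real_inner_self_eq_norm_sq, inner_sub_left, inner_sub_right, inner_sub_right,
      real_inner_smul_left, real_inner_smul_right, real_inner_smul_left, real_inner_smul_right,
      hvv, hFF, real_inner_comm (F x) v, ← hc]
    nlinarith
  have h0 : ‖m • v - F x‖ = 0 := by nlinarith [norm_nonneg (m • v - F x)]
  exact sub_eq_zero.1 (norm_eq_zero.1 h0)

theorem inner_normal_sub_neg (hΩo : IsOpen Ω) {x w : 𝔼} (hw : w ≠ 0)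
    (h : ∀ y ∈ Ω, ⟪w, y - x⟫ ≤ 0) {y : 𝔼} (hy : y ∈ Ω) : ⟪w, y - x⟫ < 0 := by
  have hcont : ContinuousAt (fun t : ℝ => y + t • w) 0 := by fun_prop
  have h1 : ∀ᶠ t in 𝓝 (0 : ℝ), y + t • w ∈ Ω :=
    hcont.eventually_mem (by simpa using hΩo.mem_nhds hy)
  obtain ⟨t, ht, ht0⟩ := ((h1.filter_mono nhdsWithin_le_nhds).and
    (self_mem_nhdsWithin (s := Ioi (0 : ℝ)))).exists
  have ht0 : 0 < t := ht0
  have h2 := h _ ht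
  have h3 : y + t • w - x = (y - x) + t • w := by abel
  rw [h3, inner_add_right, real_inner_smul_right, real_inner_self_eq_norm_sq] at h2
  have : 0 < t * ‖w‖ ^ 2 := by positivity
  linarith

theorem hessian_nonneg_of_tangent (hF : ∀ x, HasFDerivAt f (innerSL ℝ (F x)) x)
    {H : 𝔼 →L[ℝ] 𝔼} {x T : 𝔼} (hH : HasFDerivAt F H x) (hx : f x = 0) (hT : ⟪F x, T⟫ = 0)
    (hnn : ∀ t : ℝ, 0 ≤ f (x + t • T)) : 0 ≤ ⟪H T, T⟫ := by
  have h1 : ∀ t : ℝ, HasDerivAt (fun t : ℝ => x + t • T) T t := fun t => by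
    simpa using ((hasDerivAt_id t).smul_const T).const_add x
  set g : ℝ → ℝ := fun t => f (x + t • T) with hg
  have h2 : ∀ t, HasDerivAt g ⟪F (x + t • T), T⟫ t := fun t => by
    exact (hF (x + t • T)).comp_hasDerivAt t (h1 t)
  have hd : deriv g = fun t => ⟪F (x + t • T), T⟫ := funext fun t => (h2 t).deriv
  have h3 : HasDerivAt (fun t : ℝ => ⟪F (x + t • T), T⟫) ⟪H T, T⟫ 0 := by
    have h4 : HasFDerivAt F H (x + (0 : ℝ) • T) := by simpa using hH
    simpa using (h4.comp_hasDerivAt (0 : ℝ) (h1 0)).inner ℝ (hasDerivAt_const (0 : ℝ) T)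
  by_contra! hneg
  have hmax : IsLocalMax g 0 := isLocalMax_of_deriv_deriv_neg
    (by rw [hd, h3.deriv]; exact hneg) (by rw [hd]; simpa using hT) (h2 0).continuousAt
  have hg0 : g 0 = 0 := by simp [hg, hx]
  have hz : g =ᶠ[𝓝 0] fun _ => 0 := by
    filter_upwards [hmax] with t ht
    exact le_antisymm (hg0 ▸ ht) (hnn t)
  have hz2 : deriv g =ᶠ[𝓝 0] fun _ => 0 := by simpa using hz.deriv
  have := hz2.deriv_eq
  rw [hd, h3.deriv] at this
  simp at this
  linarith

theorem coordTrace_sub_normal_nonneg {H : 𝔼 →L[ℝ] 𝔼} {w : 𝔼} (hw : w ≠ 0)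
    (hH : ∀ T, ⟪w, T⟫ = 0 → 0 ≤ ⟪H T, T⟫) :
    0 ≤ coordTrace H - ⟪H w, w⟫ / ⟪w, w⟫ := by
  set a := ⟪w, w⟫ with ha
  have ha0 : a ≠ 0 := by simpa [ha] using hw
  let e : Fin n → 𝔼 := fun i => EuclideanSpace.single i 1
  have hwe : ∀ i (v : 𝔼), ⟪v, e i⟫ = v i := fun i v => by
    simp [e, EuclideanSpace.inner_single_right]
  have hsum : 0 ≤ ∑ i, ⟪H (e i - (w i / a) • w), e i - (w i / a) • w⟫ := by
    refine Finset.sum_nonneg fun i _ => hH _ ?_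
    rw [inner_sub_right, real_inner_smul_right, hwe, ← ha]
    field_simp
    ring
  have h1 : ∑ i, w i * ⟪H (e i), w⟫ = ⟪H w, w⟫ := by
    rw [← sum_clm_single_smul H w, sum_inner]
    simp [e, real_inner_smul_left]
  have h2 : ∑ i, w i * (H w) i = ⟪H w, w⟫ := by
    simp [PiLp.inner_apply]
  have h3 : ∑ i, w i * w i = a := by
    simp [ha, EuclideanSpace.real_norm_sq_eq, ← sq]
  have h4 : ∀ i, ⟪H (e i - (w i / a) • w), e i - (w i / a) • w⟫
      = H (e i) i - (w i * ⟪H (e i), w⟫) / a - (w i * (H w) i) / a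
        + (w i * w i) * ⟪H w, w⟫ / a ^ 2 := by
    intro i
    rw [map_sub, map_smul, inner_sub_left, inner_sub_right, inner_sub_right,
      real_inner_smul_left, real_inner_smul_right, real_inner_smul_left, real_inner_smul_right,
      hwe, hwe]
    field_simp
    ring
  simp_rw [h4, Finset.sum_add_distrib, Finset.sum_sub_distrib, ← Finset.sum_div,
    ← Finset.sum_mul, h1, h2, h3] at hsum
  have h5 : a * ⟪H w, w⟫ / a ^ 2 = ⟪H w, w⟫ / a := by field_simp
  rw [h5] at hsum
  have h6 : coordTrace H = ∑ i, H (e i) i := rfl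
  rw [h6]
  linarith

theorem mem_tangentConeAt_frontier (hF : ∀ x, HasFDerivAt f (innerSL ℝ (F x)) x)
    (hΩ : Ω = {x | f x < 0}) (hΩo : IsOpen Ω) {x T : 𝔼} (hx : f x = 0) (hFx : F x ≠ 0)
    (hT : ⟪F x, T⟫ = 0) (hout : ∀ t : ℝ, x + t • T ∉ Ω) :
    T ∈ tangentConeAt ℝ (frontier Ω) x := by
  have hex : ∀ κ > 0, ∃ t s : ℝ, 0 < t ∧ t < κ ∧ 0 ≤ s ∧ s ≤ κ ∧
      x + t • (T - s • F x) ∈ frontier Ω := by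
    intro κ hκ
    have hneg : ⟪F x, T - κ • F x⟫ < 0 := by
      rw [inner_sub_right, hT, real_inner_smul_right, real_inner_self_eq_norm_sq]
      have : 0 < κ * ‖F x‖ ^ 2 := by positivity
      linarith
    obtain ⟨t, ⟨ht, ht0⟩, htκ⟩ := (((eventually_add_smul_mem_sublevel hF hΩ hx hneg).and
      self_mem_nhdsWithin).and (nhdsWithin_le_nhds (Iio_mem_nhds hκ))).exists
    have ht0 : 0 < t := ht0
    let S : Set 𝔼 := (fun s : ℝ => x + t • (T - s • F x)) '' Icc 0 κ
    have hS : IsPreconnected S := isPreconnected_Icc.image _ (by fun_prop)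
    by_contra! hno
    have hsub : S ⊆ Ω := by
      refine hS.subset_of_closure_inter_subset hΩo
        ⟨_, ⟨κ, ⟨hκ.le, le_rfl⟩, rfl⟩, ht⟩ ?_
      rintro y ⟨hy, s, ⟨hs0, hs1⟩, rfl⟩
      by_contra hyΩ
      exact hno t s ht0 htκ hs0 hs1 ⟨hy, by rwa [hΩo.interior_eq]⟩
    have : x + t • T ∈ Ω := hsub ⟨0, ⟨le_rfl, hκ.le⟩, by simp⟩
    exact hout t this
  choose t s ht0 htκ hs0 hsκ hmem using fun k : ℕ => hex (1 / ((k : ℝ) + 1)) (by positivity)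
  have ht : Tendsto t atTop (𝓝 0) := squeeze_zero (fun k => (ht0 k).le) (fun k => (htκ k).le)
    tendsto_one_div_add_atTop_nhds_zero_nat
  have hs : Tendsto s atTop (𝓝 0) := squeeze_zero hs0 hsκ
    tendsto_one_div_add_atTop_nhds_zero_nat
  have hlim : Tendsto (fun k => T - s k • F x) atTop (𝓝 T) := by
    simpa using tendsto_const_nhds.sub (hs.smul_const (F x))
  refine mem_tangentConeAt_of_seq atTop (fun k => (t k)⁻¹) (fun k => t k • (T - s k • F x)) ?_
    (Eventually.of_forall hmem) ?_
  · simpa using ht.smul hlim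
  · refine hlim.congr fun k => ?_
    rw [smul_smul, inv_mul_cancel₀ (ht0 k).ne', one_smul]

/-- A continuous function that is positive on the boundary is positive near it. -/
theorem exists_pos_of_pos_on_nonneg {K : Set 𝔼} (hK : IsCompact K) (hf : ContinuousOn f K)
    {g : 𝔼 → ℝ} (hg : ContinuousOn g K) (h : ∀ x ∈ K, 0 ≤ f x → 0 < g x) :
    ∃ ε > 0, ∀ x ∈ K, -ε ≤ f x → 0 < g x := by
  have hC : IsCompact (K ∩ g ⁻¹' Iic 0) :=
    hK.of_isClosed_subset (hg.preimage_isClosed_of_isClosed hK.isClosed isClosed_Iic)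
      inter_subset_left
  rcases (K ∩ g ⁻¹' Iic 0).eq_empty_or_nonempty with he | hne
  · refine ⟨1, one_pos, fun x hx _ => ?_⟩
    by_contra! h0
    exact he.subset ⟨hx, h0⟩
  · obtain ⟨z, hz, hmax⟩ := hC.exists_isMaxOn hne (hf.mono inter_subset_left)
    have hz0 : f z < 0 := by
      by_contra! h0
      exact absurd (h z hz.1 h0) (not_lt.2 hz.2)
    refine ⟨-(f z) / 2, by linarith, fun x hx hxf => ?_⟩
    by_contra! h0
    have : f x ≤ f z := hmax ⟨hx, h0⟩
    linarith

end Sublevel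

/-- A function `u` with gradient `U` and Hessian `A` on the closure of a smooth convex domain
`{f < 0}`, where `f` has gradient `F` and Hessian `H`, satisfying a weak Robin condition. -/
structure RobinConfig (n : ℕ) where
  Ω : Set (EuclideanSpace ℝ (Fin n))
  f : EuclideanSpace ℝ (Fin n) → ℝ
  F : EuclideanSpace ℝ (Fin n) → EuclideanSpace ℝ (Fin n)
  H : EuclideanSpace ℝ (Fin n) → EuclideanSpace ℝ (Fin n) →L[ℝ] EuclideanSpace ℝ (Fin n)
  u : EuclideanSpace ℝ (Fin n) → ℝ
  U : EuclideanSpace ℝ (Fin n) → EuclideanSpace ℝ (Fin n)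
  A : EuclideanSpace ℝ (Fin n) → EuclideanSpace ℝ (Fin n) →L[ℝ] EuclideanSpace ℝ (Fin n)
  β : ℝ
  isOpen : IsOpen Ω
  isBounded : Bornology.IsBounded Ω
  eq_sublevel : Ω = {x | f x < 0}
  contDiff_f : ContDiff ℝ ∞ f
  hasFDerivAt_f : ∀ x, HasFDerivAt f (innerSL ℝ (F x)) x
  contDiff_F : ContDiff ℝ 1 F
  hasFDerivAt_F : ∀ x, HasFDerivAt F (H x) x
  symm_H : ∀ x v w, ⟪H x v, w⟫ = ⟪v, H x w⟫
  F_ne_zero : ∀ x ∈ frontier Ω, F x ≠ 0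
  support : ∀ x ∈ frontier Ω, ∀ y ∈ Ω, ⟪F x, y - x⟫ ≤ 0
  hasFDerivWithinAt_u : ∀ x ∈ closure Ω, HasFDerivWithinAt u (innerSL ℝ (U x)) (closure Ω) x
  contDiffOn_u : ContDiffOn ℝ 1 u Ω
  contDiffOn_U : ContDiffOn ℝ 1 U Ω
  hasFDerivWithinAt_U : ∀ x ∈ closure Ω, HasFDerivWithinAt U (A x) (closure Ω) x
  continuousOn_A : ContinuousOn A (closure Ω)
  β_pos : 0 < β
  robin : ∀ x ∈ frontier Ω, ⟪F x, U x⟫ + β * √⟪F x, F x⟫ * u x ≠ 0 → u x = 0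

theorem coordTrace_add (L M : 𝔼 →L[ℝ] 𝔼) :
    coordTrace (L + M) = coordTrace L + coordTrace M := by
  simp [coordTrace, Finset.sum_add_distrib]

theorem coordTrace_sub (L M : 𝔼 →L[ℝ] 𝔼) :
    coordTrace (L - M) = coordTrace L - coordTrace M := by
  simp [coordTrace, Finset.sum_sub_distrib]

theorem coordTrace_smul (c : ℝ) (L : 𝔼 →L[ℝ] 𝔼) :
    coordTrace (c • L) = c * coordTrace L := by
  simp [coordTrace, Finset.mul_sum]

theorem coordTrace_smulRight (l : 𝔼 →L[ℝ] ℝ) (v : 𝔼) :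
    coordTrace (l.smulRight v) = l v := by
  simpa [coordTrace] using sum_clm_single_mul l v

theorem continuous_coordTrace : Continuous (coordTrace : (𝔼 →L[ℝ] 𝔼) → ℝ) := by
  unfold coordTrace
  fun_prop

namespace RobinConfig

variable (D : RobinConfig n)

/-- The normal component of `U`, scaled by `‖F‖`. -/
noncomputable def P (x : EuclideanSpace ℝ (Fin n)) : ℝ := ⟪D.F x, D.U x⟫

/-- The tangential component of `U`. -/
noncomputable def T (x : EuclideanSpace ℝ (Fin n)) : EuclideanSpace ℝ (Fin n) :=
  D.U x - (D.P x / ⟪D.F x, D.F x⟫) • D.F x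

/-- The Robin defect. -/
noncomputable def Q (x : EuclideanSpace ℝ (Fin n)) : ℝ :=
  D.P x + D.β * √⟪D.F x, D.F x⟫ * D.u x

/-- The derivative of `P`. -/
noncomputable def P' (x : EuclideanSpace ℝ (Fin n)) : EuclideanSpace ℝ (Fin n) →L[ℝ] ℝ :=
  innerSL ℝ (D.U x) ∘L D.H x + innerSL ℝ (D.F x) ∘L D.A x

/-- The derivative of `Q`. -/
noncomputable def Q' (x : EuclideanSpace ℝ (Fin n)) : EuclideanSpace ℝ (Fin n) →L[ℝ] ℝ :=
  D.P' x + ((D.u x * D.β / √⟪D.F x, D.F x⟫) • (innerSL ℝ (D.F x) ∘L D.H x)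
    + (D.β * √⟪D.F x, D.F x⟫) • innerSL ℝ (D.U x))

/-- The derivative of `T`. -/
noncomputable def T' (x : EuclideanSpace ℝ (Fin n)) :
    EuclideanSpace ℝ (Fin n) →L[ℝ] EuclideanSpace ℝ (Fin n) :=
  D.A x - ((D.P x / ⟪D.F x, D.F x⟫) • D.H x
    + ((⟪D.F x, D.F x⟫⁻¹) • D.P' x
      - (2 * D.P x / ⟪D.F x, D.F x⟫ ^ 2) • (innerSL ℝ (D.F x) ∘L D.H x)).smulRight (D.F x))

/-- The boundary integrand of the Bochner identity, up to a tangential divergence. -/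
noncomputable def R (δ : ℝ) (x : EuclideanSpace ℝ (Fin n)) : ℝ :=
  D.P x * coordTrace (D.A x) - ⟪D.F x, D.A x (D.U x)⟫
    - (D.P' x (D.T x) - 2 * (Real.cos (D.Q x / δ) * D.Q' x (D.T x))
      + (D.P x - 2 * (δ * Real.sin (D.Q x / δ))) * coordTrace (D.T' x))

variable {D} {x : EuclideanSpace ℝ (Fin n)}

theorem inner_F_pos (hx : D.F x ≠ 0) : 0 < ⟪D.F x, D.F x⟫ := real_inner_self_pos.2 hx

theorem inner_F_T (hx : D.F x ≠ 0) : ⟪D.F x, D.T x⟫ = 0 := by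
  have := (inner_F_pos hx).ne'
  rw [T, inner_sub_right, real_inner_smul_right, div_mul_cancel₀ _ this, P, sub_self]

theorem inner_U_T (hx : D.F x ≠ 0) : ⟪D.U x, D.T x⟫ = ⟪D.T x, D.T x⟫ := by
  have h : D.U x = D.T x + (D.P x / ⟪D.F x, D.F x⟫) • D.F x := by simp [T]
  conv_lhs => rw [h, inner_add_left, real_inner_smul_left, inner_F_T hx]
  simp

theorem hasFDerivAt_u (hx : x ∈ D.Ω) : HasFDerivAt D.u (innerSL ℝ (D.U x)) x :=
  (D.hasFDerivWithinAt_u x (subset_closure hx)).hasFDerivAt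
    (mem_of_superset (D.isOpen.mem_nhds hx) subset_closure)

theorem hasFDerivAt_U (hx : x ∈ D.Ω) : HasFDerivAt D.U (D.A x) x :=
  (D.hasFDerivWithinAt_U x (subset_closure hx)).hasFDerivAt
    (mem_of_superset (D.isOpen.mem_nhds hx) subset_closure)

theorem hasFDerivAt_P (hx : x ∈ D.Ω) : HasFDerivAt D.P (D.P' x) x := by
  refine ((D.hasFDerivAt_F x).inner ℝ (hasFDerivAt_U hx)).congr_fderiv ?_
  ext v
  simp [P', real_inner_comm, add_comm]

theorem hasFDerivAt_inner_F : HasFDerivAt (fun y => ⟪D.F y, D.F y⟫)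
    ((2 : ℝ) • (innerSL ℝ (D.F x) ∘L D.H x)) x := by
  refine ((D.hasFDerivAt_F x).inner ℝ (D.hasFDerivAt_F x)).congr_fderiv ?_
  ext v
  simp [real_inner_comm, two_mul]

theorem hasFDerivAt_Q (hx : x ∈ D.Ω) (hF : D.F x ≠ 0) : HasFDerivAt D.Q (D.Q' x) x := by
  have h := (hasFDerivAt_P hx).add
    (((hasFDerivAt_inner_F (D := D) (x := x)).sqrt (inner_F_pos hF).ne').const_mul D.β |>.mul
      (hasFDerivAt_u hx))
  refine h.congr_fderiv ?_
  ext v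
  have : √⟪D.F x, D.F x⟫ ≠ 0 := (Real.sqrt_pos.2 (inner_F_pos hF)).ne'
  simp [Q']
  field_simp
  ring

theorem hasFDerivAt_T (hx : x ∈ D.Ω) (hF : D.F x ≠ 0) : HasFDerivAt D.T (D.T' x) x := by
  have ha := (inner_F_pos hF).ne'
  have h := (hasFDerivAt_U hx).sub
    (((hasFDerivAt_P hx).mul
      ((hasDerivAt_inv ha).comp_hasFDerivAt x hasFDerivAt_inner_F)).smul (D.hasFDerivAt_F x))
  refine (h.congr_fderiv ?_).congr_of_eventuallyEq (Eventually.of_forall fun y => ?_)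
  · ext v : 1
    simp [T']
    congr 2
    ring
  · simp [T, div_eq_mul_inv]

theorem coordTrace_T' : coordTrace (D.T' x) = coordTrace (D.A x)
    - D.P x / ⟪D.F x, D.F x⟫ * coordTrace (D.H x)
    - D.P' x (D.F x) / ⟪D.F x, D.F x⟫
    + 2 * D.P x / ⟪D.F x, D.F x⟫ ^ 2 * ⟪D.H x (D.F x), D.F x⟫ := by
  rw [T', coordTrace_sub, coordTrace_add, coordTrace_smul, coordTrace_smulRight]
  simp [real_inner_comm]
  ring

theorem R_eq (δ : ℝ) (hF : D.F x ≠ 0) : D.R δ x =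
    2 * (Real.cos (D.Q x / δ) * D.Q' x (D.T x)) - 2 * D.P' x (D.T x)
    + 2 * (δ * Real.sin (D.Q x / δ)) * coordTrace (D.T' x)
    + ⟪D.H x (D.U x), D.U x⟫ + D.P x ^ 2 / ⟪D.F x, D.F x⟫ * coordTrace (D.H x)
    - 2 * D.P x ^ 2 / ⟪D.F x, D.F x⟫ ^ 2 * ⟪D.H x (D.F x), D.F x⟫ := by
  have ha := (inner_F_pos hF).ne'
  have h1 : D.P' x (D.T x) = D.P' x (D.U x)
      - D.P x / ⟪D.F x, D.F x⟫ * D.P' x (D.F x) := by simp [T]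
  have h2 : D.P' x (D.U x) = ⟪D.H x (D.U x), D.U x⟫ + ⟪D.F x, D.A x (D.U x)⟫ := by
    simp [P', real_inner_comm]
  have h3 : ⟪D.F x, D.A x (D.U x)⟫ = D.P' x (D.T x)
      + D.P x / ⟪D.F x, D.F x⟫ * D.P' x (D.F x) - ⟪D.H x (D.U x), D.U x⟫ := by
    rw [h1, h2]; ring
  have h4 : (D.P x - 2 * (δ * Real.sin (D.Q x / δ))) * coordTrace (D.T' x)
      = D.P x * coordTrace (D.T' x)
        - 2 * (δ * Real.sin (D.Q x / δ)) * coordTrace (D.T' x) := by ring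
  rw [R, h3, h4]
  nth_rw 1 [coordTrace_T']
  field_simp
  ring

theorem eq_zero_of_mem_frontier (hx : x ∈ frontier D.Ω) : D.f x = 0 :=
  eq_zero_of_mem_frontier_sublevel D.contDiff_f.continuous D.eq_sublevel hx

theorem add_smul_notMem (hx : x ∈ frontier D.Ω) {v : 𝔼} (hv : ⟪D.F x, v⟫ = 0) (t : ℝ) :
    x + t • v ∉ D.Ω := by
  intro h
  have := inner_normal_sub_neg D.isOpen (D.F_ne_zero x hx) (D.support x hx) h
  simp [real_inner_smul_right, hv] at this

theorem hessian_nonneg (hx : x ∈ frontier D.Ω) {v : 𝔼} (hv : ⟪D.F x, v⟫ = 0) :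
    0 ≤ ⟪D.H x v, v⟫ := by
  refine hessian_nonneg_of_tangent D.hasFDerivAt_f (D.hasFDerivAt_F x)
    (eq_zero_of_mem_frontier hx) hv fun t => ?_
  have h := add_smul_notMem hx hv t
  rw [D.eq_sublevel] at h
  exact not_lt.1 h

theorem continuousOn_U : ContinuousOn D.U (closure D.Ω) :=
  fun x hx => (D.hasFDerivWithinAt_U x hx).continuousWithinAt

theorem continuousOn_u : ContinuousOn D.u (closure D.Ω) :=
  fun x hx => (D.hasFDerivWithinAt_u x hx).continuousWithinAt

theorem continuousOn_P : ContinuousOn D.P (closure D.Ω) :=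
  D.contDiff_F.continuous.continuousOn.inner continuousOn_U

theorem continuous_inner_F : Continuous fun x => ⟪D.F x, D.F x⟫ :=
  D.contDiff_F.continuous.inner D.contDiff_F.continuous

theorem continuousOn_Q : ContinuousOn D.Q (closure D.Ω) :=
  continuousOn_P.add
    ((continuous_const.mul continuous_inner_F.sqrt).continuousOn.mul continuousOn_u)

theorem T_eq_zero_of_Q_ne_zero (hx : x ∈ frontier D.Ω) (hQ : D.Q x ≠ 0) :
    D.u x = 0 ∧ D.T x = 0 := by
  have hsub : frontier D.Ω ⊆ closure D.Ω := frontier_subset_closure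
  have hev : ∀ᶠ y in 𝓝[frontier D.Ω] x, D.u y = 0 := by
    have h1 : ∀ᶠ y in 𝓝[frontier D.Ω] x, D.Q y ≠ 0 :=
      ((continuousOn_Q x (hsub hx)).mono hsub).eventually_ne hQ
    filter_upwards [h1, self_mem_nhdsWithin] with y hy hyf using D.robin y hyf hy
  have hu : D.u x = 0 := D.robin x hx hQ
  refine ⟨hu, ?_⟩
  have hF := D.F_ne_zero x hx
  have h1 := (D.hasFDerivWithinAt_u x (hsub hx)).mono hsub
  have h2 : HasFDerivWithinAt D.u (0 : 𝔼 →L[ℝ] ℝ) (frontier D.Ω) x :=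
    (hasFDerivWithinAt_const (0 : ℝ) x _).congr_of_eventuallyEq hev hu
  have h3 := h1.unique_on h2 (mem_tangentConeAt_frontier D.hasFDerivAt_f D.eq_sublevel D.isOpen
    (eq_zero_of_mem_frontier hx) hF (inner_F_T hF) (add_smul_notMem hx (inner_F_T hF)))
  rw [innerSL_apply_apply, inner_U_T hF] at h3
  simpa using h3

theorem le_R_of_mem_frontier (δ : ℝ) (hx : x ∈ frontier D.Ω) :
    2 * (δ * Real.sin (D.Q x / δ)) * coordTrace (D.T' x) ≤ D.R δ x := by
  have hF := D.F_ne_zero x hx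
  have ha := inner_F_pos hF
  rw [R_eq δ hF]
  have hT := hessian_nonneg hx (inner_F_T hF)
  have hN : 0 ≤ D.P x ^ 2 / ⟪D.F x, D.F x⟫ *
      (coordTrace (D.H x) - ⟪D.H x (D.F x), D.F x⟫ / ⟪D.F x, D.F x⟫) :=
    mul_nonneg (by positivity) (coordTrace_sub_normal_nonneg hF fun v hv => hessian_nonneg hx hv)
  have hU : D.U x = D.T x + (D.P x / ⟪D.F x, D.F x⟫) • D.F x := by simp [T]
  have hHU : ⟪D.H x (D.U x), D.U x⟫ = ⟪D.H x (D.T x), D.T x⟫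
      + 2 * (D.P x / ⟪D.F x, D.F x⟫) * ⟪D.F x, D.H x (D.T x)⟫
      + (D.P x / ⟪D.F x, D.F x⟫) ^ 2 * ⟪D.H x (D.F x), D.F x⟫ := by
    conv_lhs => rw [hU]
    rw [map_add, map_smul, inner_add_left, inner_add_right, inner_add_right,
      real_inner_smul_left, real_inner_smul_right, real_inner_smul_left, real_inner_smul_right,
      D.symm_H x (D.F x) (D.T x), real_inner_comm (D.F x) (D.H x (D.T x))]
    ring
  rw [hHU]
  have : D.P x ^ 2 / ⟪D.F x, D.F x⟫ *
    (coordTrace (D.H x) - ⟪D.H x (D.F x), D.F x⟫ / ⟪D.F x, D.F x⟫) =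
    D.P x ^ 2 / ⟪D.F x, D.F x⟫ * coordTrace (D.H x)
    - D.P x ^ 2 / ⟪D.F x, D.F x⟫ ^ 2 * ⟪D.H x (D.F x), D.F x⟫ := by field_simp
  have h7 : (D.P x / ⟪D.F x, D.F x⟫) ^ 2 = D.P x ^ 2 / ⟪D.F x, D.F x⟫ ^ 2 := div_pow _ _ _
  rw [h7]
  have h8 : 2 * D.P x ^ 2 / ⟪D.F x, D.F x⟫ ^ 2 = 2 * (D.P x ^ 2 / ⟪D.F x, D.F x⟫ ^ 2) :=
    mul_div_assoc _ _ _
  rw [h8]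
  by_cases hQ : D.Q x = 0
  · have hs : 0 < √⟪D.F x, D.F x⟫ := Real.sqrt_pos.2 ha
    have hss : √⟪D.F x, D.F x⟫ ^ 2 = ⟪D.F x, D.F x⟫ := Real.sq_sqrt ha.le
    have hP : D.P x = -(D.β * √⟪D.F x, D.F x⟫ * D.u x) := by
      rw [Q] at hQ; linarith
    have hQ' : D.Q' x (D.T x) = D.P' x (D.T x)
        - D.P x / ⟪D.F x, D.F x⟫ * ⟪D.F x, D.H x (D.T x)⟫
        + D.β * √⟪D.F x, D.F x⟫ * ⟪D.T x, D.T x⟫ := by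
      have h5 : D.u x * D.β / √⟪D.F x, D.F x⟫ = - (D.P x / ⟪D.F x, D.F x⟫) := by
        rw [hP]
        nth_rw 3 [← hss]
        field_simp
      simp only [Q', add_apply, smul_apply,
        ContinuousLinearMap.comp_apply, innerSL_apply_apply, smul_eq_mul, inner_U_T hF, h5]
      ring
    have hTT : 0 ≤ D.β * √⟪D.F x, D.F x⟫ * ⟪D.T x, D.T x⟫ :=
      mul_nonneg (mul_nonneg D.β_pos.le hs.le) real_inner_self_nonneg
    rw [hQ, hQ', zero_div, Real.cos_zero, Real.sin_zero]
    linarith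
  · obtain ⟨-, hT0⟩ := T_eq_zero_of_Q_ne_zero hx hQ
    simp only [hT0, map_zero, inner_zero_right, mul_zero]
    linarith

theorem continuous_H : Continuous D.H := by
  have : fderiv ℝ D.F = D.H := funext fun x => (D.hasFDerivAt_F x).fderiv
  exact this ▸ D.contDiff_F.continuous_fderiv one_ne_zero

theorem continuousOn_T {S : Set 𝔼} (hS : S ⊆ closure D.Ω) (hF : ∀ x ∈ S, D.F x ≠ 0) :
    ContinuousOn D.T S :=
  (continuousOn_U.mono hS).sub (((continuousOn_P.mono hS).div continuous_inner_F.continuousOn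
    fun x hx => (inner_F_pos (hF x hx)).ne').smul D.contDiff_F.continuous.continuousOn)

theorem continuousOn_P' {S : Set 𝔼} (hS : S ⊆ closure D.Ω) : ContinuousOn D.P' S := by
  have hU := continuousOn_U.mono hS
  have hA := D.continuousOn_A.mono hS
  have hH := (continuous_H (D := D)).continuousOn (s := S)
  have hf := D.contDiff_F.continuous.continuousOn (s := S)
  exact (((innerSL ℝ).continuous.comp_continuousOn hU).clm_comp hH).add
    (((innerSL ℝ).continuous.comp_continuousOn hf).clm_comp hA)

theorem continuousOn_Q' {S : Set 𝔼} (hS : S ⊆ closure D.Ω) (hF : ∀ x ∈ S, D.F x ≠ 0) :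
    ContinuousOn D.Q' S := by
  have hU := continuousOn_U.mono hS
  have hu := continuousOn_u.mono hS
  have hH := (continuous_H (D := D)).continuousOn (s := S)
  have hf := D.contDiff_F.continuous.continuousOn (s := S)
  have hs := (continuous_inner_F (D := D)).sqrt.continuousOn (s := S)
  have hs0 : ∀ x ∈ S, √⟪D.F x, D.F x⟫ ≠ 0 := fun x hx =>
    (Real.sqrt_pos.2 (inner_F_pos (hF x hx))).ne'
  exact (continuousOn_P' hS).add ((((hu.mul continuousOn_const).div hs hs0).smul
    (((innerSL ℝ).continuous.comp_continuousOn hf).clm_comp hH)).add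
    ((continuousOn_const.mul hs).smul ((innerSL ℝ).continuous.comp_continuousOn hU)))

theorem continuousOn_coordTrace_T' {S : Set 𝔼} (hS : S ⊆ closure D.Ω)
    (hF : ∀ x ∈ S, D.F x ≠ 0) : ContinuousOn (fun x => coordTrace (D.T' x)) S := by
  have hA := D.continuousOn_A.mono hS
  have hH := (continuous_H (D := D)).continuousOn (s := S)
  have hf := D.contDiff_F.continuous.continuousOn (s := S)
  have ha := (continuous_inner_F (D := D)).continuousOn (s := S)
  have ha0 : ∀ x ∈ S, ⟪D.F x, D.F x⟫ ≠ 0 := fun x hx => (inner_F_pos (hF x hx)).ne'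
  have hP := continuousOn_P.mono hS
  have hP' := continuousOn_P' hS
  simp_rw [coordTrace_T']
  exact (((continuous_coordTrace.comp_continuousOn hA).sub
    ((hP.div ha ha0).mul (continuous_coordTrace.comp_continuousOn hH))).sub
    ((hP'.clm_apply hf).div ha ha0)).add (((continuousOn_const.mul hP).div (ha.pow 2)
      fun x hx => pow_ne_zero 2 (ha0 x hx)).mul ((hH.clm_apply hf).inner hf))

theorem continuousOn_R (δ : ℝ) {S : Set 𝔼} (hS : S ⊆ closure D.Ω) (hF : ∀ x ∈ S, D.F x ≠ 0) :
    ContinuousOn (D.R δ) S := by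
  have hA := D.continuousOn_A.mono hS
  have hf := D.contDiff_F.continuous.continuousOn (s := S)
  have hP := continuousOn_P.mono hS
  have hU := continuousOn_U.mono hS
  have hQ : ContinuousOn (fun x => D.Q x / δ) S := (continuousOn_Q.mono hS).div_const δ
  have hT := continuousOn_T hS hF
  exact ((hP.mul (continuous_coordTrace.comp_continuousOn hA)).sub
    (hf.inner (hA.clm_apply hU))).sub ((((continuousOn_P' hS).clm_apply hT).sub
      (continuousOn_const.mul ((Real.continuous_cos.comp_continuousOn hQ).mul
        ((continuousOn_Q' hS hF).clm_apply hT)))).add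
      ((hP.sub (continuousOn_const.mul (continuousOn_const.mul
        (Real.continuous_sin.comp_continuousOn hQ)))).mul (continuousOn_coordTrace_T' hS hF)))

theorem hasFDerivAt_field {δ : ℝ} (hδ : δ ≠ 0) (hx : x ∈ D.Ω) (hF : D.F x ≠ 0) :
    HasFDerivAt (fun y => (D.P y - 2 * (δ * Real.sin (D.Q y / δ))) • D.T y)
      ((D.P x - 2 * (δ * Real.sin (D.Q x / δ))) • D.T' x
        + (D.P' x - (2 * Real.cos (D.Q x / δ)) • D.Q' x).smulRight (D.T x)) x := by
  have h1 : HasFDerivAt (fun y => D.Q y / δ) (δ⁻¹ • D.Q' x) x := by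
    simpa [div_eq_inv_mul] using (hasFDerivAt_Q hx hF).const_mul δ⁻¹
  have h2 := (hasFDerivAt_P hx).sub ((h1.sin.const_mul δ).const_mul 2)
  refine (h2.smul (hasFDerivAt_T hx hF)).congr_fderiv ?_
  congr 2
  rw [smul_smul, smul_smul, smul_smul]
  congr 2
  field_simp

theorem contDiffOn_field (δ : ℝ) {S : Set 𝔼} (hS : S ⊆ D.Ω) (hF : ∀ x ∈ S, D.F x ≠ 0) :
    ContDiffOn ℝ 1 (fun y => (D.P y - 2 * (δ * Real.sin (D.Q y / δ))) • D.T y) S := by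
  have hU : ContDiffOn ℝ 1 D.U S := D.contDiffOn_U.mono hS
  have hu : ContDiffOn ℝ 1 D.u S := D.contDiffOn_u.mono hS
  have hf : ContDiffOn ℝ 1 D.F S := D.contDiff_F.contDiffOn
  have ha : ContDiffOn ℝ 1 (fun y => ⟪D.F y, D.F y⟫) S := hf.inner ℝ hf
  have ha0 : ∀ x ∈ S, ⟪D.F x, D.F x⟫ ≠ 0 := fun x hx => (inner_F_pos (hF x hx)).ne'
  have hP : ContDiffOn ℝ 1 D.P S := hf.inner ℝ hU
  have hT : ContDiffOn ℝ 1 D.T S := hU.sub ((hP.div ha ha0).smul hf)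
  have hQ : ContDiffOn ℝ 1 D.Q S := hP.add ((contDiffOn_const.mul (ha.sqrt ha0)).mul hu)
  exact (hP.sub (contDiffOn_const.mul (contDiffOn_const.mul
    (Real.contDiff_sin.comp_contDiffOn (hQ.div_const δ))))).smul hT

end RobinConfig

theorem integrable_mul_of_continuousOn {ψ h : 𝔼 → ℝ} {V : Set 𝔼} (hV : IsOpen V)
    (hψ : Continuous ψ) (hc : HasCompactSupport ψ) (hs : tsupport ψ ⊆ V)
    (hh : ContinuousOn h V) : Integrable (fun x => ψ x * h x) := by
  refine Continuous.integrable_of_hasCompactSupport (continuous_of_tsupport fun x hx => ?_)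
    hc.mul_right
  exact hψ.continuousAt.mul (hh.continuousAt (hV.mem_nhds (hs (tsupport_mul_subset_left hx))))

/-- A smooth cutoff `χ` of the sublevel set `{f < 0}`; its gradient is `-ρ • F`, where `ρ` is
supported in a thin collar and is constant along the level sets of `f`. -/
theorem exists_cutoff {f : 𝔼 → ℝ} {F : 𝔼 → 𝔼} (hf : ContDiff ℝ ∞ f)
    (hF : ∀ x, HasFDerivAt f (innerSL ℝ (F x)) x) {ε : ℝ} (hε : 0 < ε) :
    ∃ χ ρ : 𝔼 → ℝ, ContDiff ℝ 1 χ ∧ ContDiff ℝ 1 ρ ∧ (∀ x, 0 ≤ χ x ∧ χ x ≤ 1) ∧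
      (∀ x, 0 ≤ ρ x) ∧ (∀ x, χ x ≠ 0 → f x ≤ -ε) ∧ (∀ x, f x ≤ -(2 * ε) → χ x = 1) ∧
      (∀ x, ρ x ≠ 0 → -(2 * ε) ≤ f x ∧ f x ≤ -ε) ∧
      (∀ x v, fderiv ℝ χ x v = -(ρ x * ⟪F x, v⟫)) ∧
      ∀ x v, ⟪F x, v⟫ = 0 → fderiv ℝ ρ x v = 0 := by
  set s := Real.smoothTransition with hs
  have hsd : ContDiff ℝ 2 s := Real.smoothTransition.contDiff (n := 2)
  have hs' : ContDiff ℝ 1 (deriv s) := by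
    have : ContDiff ℝ (1 + 1) s := by simpa [one_add_one_eq_two] using hsd
    exact (contDiff_succ_iff_deriv.1 this).2.2
  let m : 𝔼 → ℝ := fun x => -f x / ε - 1
  have hm : ContDiff ℝ 1 m := by
    have : ContDiff ℝ 1 f := hf.of_le (by exact_mod_cast le_top)
    exact (this.neg.div_const ε).sub contDiff_const
  have hmd : ∀ x, HasFDerivAt m (-(ε⁻¹ • innerSL ℝ (F x))) x := fun x => by
    have := ((hF x).const_mul (-ε⁻¹)).sub_const 1
    have h2 : m = fun y => -ε⁻¹ * f y - 1 := by
      funext y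
      simp only [m]
      ring
    rw [h2]
    simpa using this
  have hd0 : ∀ y, y ≤ 0 ∨ 1 ≤ y → deriv s y = 0 := by
    rintro y (hy | hy)
    · have : IsLocalMin s y := Eventually.of_forall fun z => by
        rw [hs, Real.smoothTransition.zero_of_nonpos hy]
        exact Real.smoothTransition.nonneg z
      exact this.deriv_eq_zero
    · have : IsLocalMax s y := Eventually.of_forall fun z => by
        rw [hs, Real.smoothTransition.one_of_one_le hy]
        exact Real.smoothTransition.le_one z
      exact this.deriv_eq_zero
  refine ⟨fun x => s (m x), fun x => ε⁻¹ * deriv s (m x), (hsd.of_le one_le_two).comp hm,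
    contDiff_const.mul (hs'.comp hm), fun x => ⟨Real.smoothTransition.nonneg _,
      Real.smoothTransition.le_one _⟩, fun x => mul_nonneg (inv_nonneg.2 hε.le)
      Real.smoothTransition.monotone.deriv_nonneg, fun x hx => ?_, fun x hx => ?_,
      fun x hx => ?_, fun x v => ?_, fun x v hv => ?_⟩
  · by_contra! h
    refine hx (Real.smoothTransition.zero_of_nonpos ?_)
    have : -f x / ε ≤ 1 := by rw [div_le_one hε]; linarith
    simp only [m]
    linarith
  · refine Real.smoothTransition.one_of_one_le ?_
    have : 2 ≤ -f x / ε := by rw [le_div_iff₀ hε]; linarith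
    simp only [m]
    linarith
  · have h1 : ¬ (m x ≤ 0 ∨ 1 ≤ m x) := fun h => hx (by simp [hd0 _ h])
    push Not at h1
    simp only [m] at h1
    have h2 : 1 < -f x / ε := by linarith
    have h3 : -f x / ε < 2 := by linarith
    rw [lt_div_iff₀ hε] at h2
    rw [div_lt_iff₀ hε] at h3
    constructor <;> linarith
  · have := ((hsd.differentiable two_ne_zero (m x)).hasDerivAt.comp_hasFDerivAt x (hmd x)).fderiv
    rw [show (fun x => s (m x)) = s ∘ m from rfl, this]
    simp
    ring
  · have h := ((hs'.differentiable one_ne_zero (m x)).hasDerivAt.comp_hasFDerivAt x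
      (hmd x)).const_mul ε⁻¹
    have h2 := h.fderiv
    simp only [Function.comp_def] at h2
    rw [h2]
    simp [hv]

namespace RobinConfig

variable (D : RobinConfig n)

/-- The quadratic expression `(tr A)² - tr (A²)`. -/
noncomputable def J (x : EuclideanSpace ℝ (Fin n)) : ℝ :=
  coordTrace (D.A x) ^ 2 - ∑ i : Fin n, ∑ j : Fin n,
    D.A x (EuclideanSpace.single j 1) i * D.A x (EuclideanSpace.single i 1) j

variable {D} {x : EuclideanSpace ℝ (Fin n)}

theorem continuousOn_J : ContinuousOn D.J (closure D.Ω) := by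
  have h : ContinuousOn (fun x => coordTrace (D.A x)) (closure D.Ω) :=
    continuous_coordTrace.comp_continuousOn D.continuousOn_A
  have hA := D.continuousOn_A
  refine (h.pow 2).sub (continuousOn_finsetSum _ fun i _ => continuousOn_finsetSum _ fun j _ => ?_)
  fun_prop

theorem isCompact_closure : IsCompact (closure D.Ω) := D.isBounded.isCompact_closure

theorem isCompact_sublevel {c : ℝ} (hc : c < 0) : IsCompact {x | D.f x ≤ c} := by
  refine (isCompact_closure (D := D)).of_isClosed_subset
    (isClosed_le D.contDiff_f.continuous continuous_const) fun x hx => subset_closure ?_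
  rw [D.eq_sublevel]
  exact lt_of_le_of_lt hx hc

/-- The cut-off Bochner identity: the boundary term is concentrated in the collar. -/
theorem integral_cutoff_eq {δ ε : ℝ} (hδ : δ ≠ 0) (hε : 0 < ε)
    (hF : ∀ x ∈ D.Ω, -(2 * ε) ≤ D.f x → D.F x ≠ 0) {χ ρ : 𝔼 → ℝ} (hχ : ContDiff ℝ 1 χ)
    (hρ : ContDiff ℝ 1 ρ) (hχs : ∀ x, χ x ≠ 0 → D.f x ≤ -ε)
    (hρs : ∀ x, ρ x ≠ 0 → -(2 * ε) ≤ D.f x ∧ D.f x ≤ -ε)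
    (hχd : ∀ x v, fderiv ℝ χ x v = -(ρ x * ⟪D.F x, v⟫))
    (hρd : ∀ x v, ⟪D.F x, v⟫ = 0 → fderiv ℝ ρ x v = 0) :
    Integrable (fun x => ρ x * D.R δ x) ∧ ∫ x, χ x * D.J x = ∫ x, ρ x * D.R δ x := by
  have hfc := D.contDiff_f.continuous
  have hcpt := isCompact_sublevel (D := D) (neg_neg_of_pos hε)
  have hsubΩ : {x | D.f x ≤ -ε} ⊆ D.Ω := fun x hx => by
    rw [D.eq_sublevel]
    exact lt_of_le_of_lt hx (neg_neg_of_pos hε)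
  have htχ : tsupport χ ⊆ {x | D.f x ≤ -ε} := closure_minimal hχs hcpt.isClosed
  have htρ : tsupport ρ ⊆ {x | -(2 * ε) ≤ D.f x} ∩ {x | D.f x ≤ -ε} :=
    closure_minimal hρs ((isClosed_le continuous_const hfc).inter hcpt.isClosed)
  have hcχ : HasCompactSupport χ := hcpt.of_isClosed_subset (isClosed_tsupport _) htχ
  have hcρ : HasCompactSupport ρ :=
    hcpt.of_isClosed_subset (isClosed_tsupport _) (htρ.trans inter_subset_right)
  let V : Set 𝔼 := D.Ω ∩ {x | D.F x ≠ 0}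
  have hV : IsOpen V := D.isOpen.inter (isOpen_ne_fun D.contDiff_F.continuous continuous_const)
  have hVF : ∀ x ∈ V, D.F x ≠ 0 := fun x hx => hx.2
  have hVK : V ⊆ closure D.Ω := inter_subset_left.trans subset_closure
  have htV : tsupport ρ ⊆ V := fun x hx =>
    ⟨hsubΩ (htρ hx).2, hF x (hsubΩ (htρ hx).2) (htρ hx).1⟩
  have hρ0 : ∀ x, x ∉ V → ρ x = 0 := fun x hx => image_eq_zero_of_notMem_tsupport (hx <| htV ·)
  have hχ0 : ∀ x, x ∉ D.Ω → χ x = 0 := fun x hx =>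
    image_eq_zero_of_notMem_tsupport fun h => hx (hsubΩ (htχ h))
  have h1 : ∫ x, (χ x * D.J x - ρ x * (D.P x * coordTrace (D.A x)
      - ⟪D.F x, D.A x (D.U x)⟫)) = 0 := by
    rw [← integral_cutoff_bochner D.isOpen hχ hcχ (htχ.trans hsubΩ) D.contDiffOn_U]
    congr 1 with x
    by_cases hx : x ∈ D.Ω
    · rw [(hasFDerivAt_U hx).fderiv, hχd, hχd, J, P]
      ring
    · simp [hχ0 x hx, hρ0 x fun h => hx h.1, hχd]
  have h2 : ∫ x, ρ x * (D.P' x (D.T x) - 2 * (Real.cos (D.Q x / δ) * D.Q' x (D.T x))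
      + (D.P x - 2 * (δ * Real.sin (D.Q x / δ))) * coordTrace (D.T' x)) = 0 := by
    rw [← integral_div_smul_eq_zero hV hρ hcρ htV (contDiffOn_field δ inter_subset_left hVF)]
    congr 1 with x
    by_cases hx : x ∈ V
    · rw [(hasFDerivAt_field hδ hx.1 hx.2).fderiv, coordTrace_add, coordTrace_smul,
        coordTrace_smulRight, map_smul, hρd x _ (inner_F_T hx.2)]
      simp only [sub_apply, smul_apply, smul_eq_mul]
      ring
    · have hd : fderiv ℝ ρ x = 0 := image_eq_zero_of_notMem_tsupport
        fun h => hx (htV (tsupport_fderiv_subset ℝ h))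
      simp [hρ0 x hx, hd]
  have hA := D.continuousOn_A.mono hVK
  have hB : ContinuousOn (fun x => D.P x * coordTrace (D.A x) - ⟪D.F x, D.A x (D.U x)⟫) V :=
    ((continuousOn_P.mono hVK).mul (continuous_coordTrace.comp_continuousOn hA)).sub
      (D.contDiff_F.continuous.continuousOn.inner (hA.clm_apply (continuousOn_U.mono hVK)))
  have hR := continuousOn_R δ hVK hVF
  have i1 := integrable_mul_of_continuousOn D.isOpen hχ.continuous hcχ (htχ.trans hsubΩ)
    (continuousOn_J.mono subset_closure)
  have i2 := integrable_mul_of_continuousOn hV hρ.continuous hcρ htV hB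
  have i3 := integrable_mul_of_continuousOn hV hρ.continuous hcρ htV hR
  refine ⟨i3, ?_⟩
  rw [integral_sub i1 i2, sub_eq_zero] at h1
  rw [h1, ← sub_eq_zero, ← integral_sub i2 i3, ← h2]
  congr 1 with x
  rw [R]
  ring


variable {D : RobinConfig n} {x : EuclideanSpace ℝ (Fin n)}

theorem integrableOn_of_continuousOn_closure {h : 𝔼 → ℝ} (hh : ContinuousOn h (closure D.Ω)) :
    IntegrableOn h D.Ω :=
  (hh.integrableOn_compact isCompact_closure).mono_set subset_closure

theorem tendsto_integral_cutoff {χ : ℕ → 𝔼 → ℝ} (hχ : ∀ k, Continuous (χ k))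
    (hχ1 : ∀ k x, 0 ≤ χ k x ∧ χ k x ≤ 1) (hχ0 : ∀ k, ∀ x ∉ D.Ω, χ k x = 0)
    (hχt : ∀ x ∈ D.Ω, ∀ᶠ k in atTop, χ k x = 1) {h : 𝔼 → ℝ}
    (hh : ContinuousOn h (closure D.Ω)) :
    Tendsto (fun k => ∫ x, χ k x * h x) atTop (𝓝 (∫ x in D.Ω, h x)) := by
  have hi := integrableOn_of_continuousOn_closure hh
  rw [← integral_indicator D.isOpen.measurableSet]
  have hi' := (integrable_indicator_iff D.isOpen.measurableSet).2 hi
  have heq : ∀ k x, χ k x * h x = χ k x * D.Ω.indicator h x := fun k x => by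
    by_cases hx : x ∈ D.Ω
    · rw [indicator_of_mem hx]
    · rw [hχ0 k x hx, zero_mul, zero_mul]
  simp_rw [heq]
  refine tendsto_integral_of_dominated_convergence (fun x => ‖D.Ω.indicator h x‖)
    (fun k => (hχ k).aestronglyMeasurable.mul hi'.aestronglyMeasurable) hi'.norm
    (fun k => ae_of_all _ fun x => ?_) (ae_of_all _ fun x => ?_)
  · rw [norm_mul, Real.norm_of_nonneg (hχ1 k x).1]
    exact mul_le_of_le_one_left (norm_nonneg _) (hχ1 k x).2
  · by_cases hx : x ∈ D.Ω
    · refine tendsto_const_nhds.congr' ?_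
      filter_upwards [hχt x hx] with k hk
      rw [hk, one_mul]
    · simp [indicator_of_notMem hx]

theorem mem_frontier_of_nonneg (hx : x ∈ closure D.Ω) (h : 0 ≤ D.f x) : x ∈ frontier D.Ω := by
  rw [D.isOpen.frontier_eq]
  refine ⟨hx, fun hxΩ => ?_⟩
  rw [D.eq_sublevel] at hxΩ
  exact not_lt.2 h hxΩ

/-- Near the boundary, `R δ` is bounded below by `-C δ ⟪F, F⟫`. -/
theorem exists_R_lower_bound (D : RobinConfig n) : ∃ C : ℝ, ∀ δ > 0, ∃ ε > 0,
    ∀ x ∈ closure D.Ω, -ε ≤ D.f x → D.F x ≠ 0 ∧ 0 ≤ D.R δ x + C * δ * ⟪D.F x, D.F x⟫ := by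
  have hfc := D.contDiff_f.continuous
  obtain ⟨ε₁, hε₁, h₁⟩ := exists_pos_of_pos_on_nonneg isCompact_closure hfc.continuousOn
    (continuous_inner_F (D := D)).continuousOn fun x hx hfx =>
      inner_F_pos (D.F_ne_zero x (mem_frontier_of_nonneg hx hfx))
  let S : Set 𝔼 := closure D.Ω ∩ {x | -ε₁ ≤ D.f x}
  have hS : IsCompact S := isCompact_closure.inter_right (isClosed_le continuous_const hfc)
  have hSK : S ⊆ closure D.Ω := inter_subset_left
  have hSF : ∀ x ∈ S, D.F x ≠ 0 := fun x hx => real_inner_self_pos.1 (h₁ x hx.1 hx.2)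
  obtain ⟨C, hC⟩ := hS.exists_bound_of_continuousOn
    ((continuousOn_coordTrace_T' hSK hSF).div (continuous_inner_F (D := D)).continuousOn
      fun x hx => (inner_F_pos (hSF x hx)).ne')
  refine ⟨2 * C + 1, fun δ hδ => ?_⟩
  have hg : ContinuousOn (fun x => D.R δ x + (2 * C + 1) * δ * ⟪D.F x, D.F x⟫) S :=
    (continuousOn_R δ hSK hSF).add (continuous_const.mul continuous_inner_F).continuousOn
  obtain ⟨ε₂, hε₂, h₂⟩ := exists_pos_of_pos_on_nonneg hS hfc.continuousOn hg fun x hx hfx => by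
    have hfr := mem_frontier_of_nonneg hx.1 hfx
    have ha := inner_F_pos (hSF x hx)
    have hR := le_R_of_mem_frontier δ hfr
    have hT := hC x hx
    rw [Pi.div_apply, Real.norm_eq_abs, abs_div, abs_of_pos ha, div_le_iff₀ ha] at hT
    have h3 : |2 * (δ * Real.sin (D.Q x / δ)) * coordTrace (D.T' x)|
        ≤ 2 * δ * (C * ⟪D.F x, D.F x⟫) := by
      rw [abs_mul, abs_mul, abs_mul, abs_two, abs_of_pos hδ]
      have h4 := Real.abs_sin_le_one (D.Q x / δ)
      gcongr
      nlinarith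
    have h5 := neg_abs_le (2 * (δ * Real.sin (D.Q x / δ)) * coordTrace (D.T' x))
    have h6 := mul_pos hδ ha
    nlinarith
  refine ⟨min ε₁ ε₂, lt_min hε₁ hε₂, fun x hx hfx => ?_⟩
  have hxS : x ∈ S := ⟨hx, (neg_le_neg (min_le_left _ _)).trans hfx⟩
  exact ⟨hSF x hxS, (h₂ x hxS ((neg_le_neg (min_le_right _ _)).trans hfx)).le⟩

theorem integral_J_nonneg (D : RobinConfig n) : 0 ≤ ∫ x in D.Ω, D.J x := by
  obtain ⟨C, hC⟩ := exists_R_lower_bound D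
  have hε : ∀ k : ℕ, (0 : ℝ) < 1 / ((k : ℝ) + 1) := fun k => by positivity
  choose χ ρ hχ hρ hχ1 hρ0 hχs hχt hρs hχd hρd using fun k : ℕ =>
    exists_cutoff D.contDiff_f D.hasFDerivAt_f (hε k)
  have hlim : ∀ c > 0, ∀ᶠ k : ℕ in atTop, 2 * (1 / ((k : ℝ) + 1)) < c := fun c hc => by
    have : Tendsto (fun k : ℕ => 2 * (1 / ((k : ℝ) + 1))) atTop (𝓝 0) := by
      simpa using tendsto_one_div_add_atTop_nhds_zero_nat.const_mul (2 : ℝ)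
    exact this.eventually_lt_const hc
  have hsub : ∀ k : ℕ, {x | D.f x ≤ -(1 / ((k : ℝ) + 1))} ⊆ D.Ω := fun k x hx => by
    rw [D.eq_sublevel]
    exact lt_of_le_of_lt hx (neg_neg_of_pos (hε k))
  have hχΩ : ∀ k, ∀ x ∉ D.Ω, χ k x = 0 := fun k x hx => by
    by_contra h
    exact hx (hsub k (hχs k x h))
  have hχev : ∀ x ∈ D.Ω, ∀ᶠ k in atTop, χ k x = 1 := fun x hx => by
    rw [D.eq_sublevel] at hx
    have hx : D.f x < 0 := hx
    filter_upwards [hlim (-D.f x) (by linarith)] with k hk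
    exact hχt k x (by linarith)
  have hχc : ∀ k, HasCompactSupport (χ k) := fun k =>
    have hcpt := isCompact_sublevel (D := D) (neg_neg_of_pos (hε k))
    hcpt.of_isClosed_subset (isClosed_tsupport _) (closure_minimal (hχs k) hcpt.isClosed)
  have htr : Continuous fun x => coordTrace (D.H x) := continuous_coordTrace.comp continuous_H
  have hmass : ∀ k, ∫ x, ρ k x * ⟪D.F x, D.F x⟫ = ∫ x, χ k x * coordTrace (D.H x) := fun k => by
    have h := integral_div_smul_eq_zero isOpen_univ (hχ k) (hχc k) (subset_univ _)
      D.contDiff_F.contDiffOn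
    have hρe : ∀ x, ρ k x * ⟪D.F x, D.F x⟫ = -(fderiv ℝ (χ k) x (D.F x)) := fun x => by
      rw [hχd, neg_neg]
    simp_rw [hρe, integral_neg]
    have h2 : Integrable fun x => fderiv ℝ (χ k) x (D.F x) :=
      (((hχ k).continuous_fderiv one_ne_zero).clm_apply
        D.contDiff_F.continuous).integrable_of_hasCompactSupport
        (((hχc k).fderiv ℝ).mono fun x hx h0 => hx (by
          simp [show fderiv ℝ (χ k) x = 0 from h0]))
    have h3 : Integrable fun x => χ k x * coordTrace (D.H x) :=
      ((hχ k).continuous.mul htr).integrable_of_hasCompactSupport (hχc k).mul_right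
    simp_rw [(D.hasFDerivAt_F _).fderiv] at h
    rw [integral_add h2 h3] at h
    linarith
  have key : ∀ δ > 0, -(C * δ) * ∫ x in D.Ω, coordTrace (D.H x) ≤ ∫ x in D.Ω, D.J x := by
    intro δ hδ
    obtain ⟨ε, hε0, hR⟩ := hC δ hδ
    refine le_of_tendsto_of_tendsto
      ((tendsto_integral_cutoff (fun k => (hχ k).continuous) hχ1 hχΩ hχev
        htr.continuousOn).const_mul (-(C * δ)))
      (tendsto_integral_cutoff (fun k => (hχ k).continuous) hχ1 hχΩ hχev continuousOn_J) ?_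
    filter_upwards [hlim ε hε0] with k hk
    have hF : ∀ x ∈ D.Ω, -(2 * (1 / ((k : ℝ) + 1))) ≤ D.f x → D.F x ≠ 0 := fun x hx hfx =>
      (hR x (subset_closure hx) (by linarith)).1
    obtain ⟨hi, heq⟩ := integral_cutoff_eq hδ.ne' (hε k) hF (hχ k) (hρ k) (hχs k) (hρs k)
      (hχd k) (hρd k)
    have hcpt := isCompact_sublevel (D := D) (neg_neg_of_pos (hε k))
    have hρc : HasCompactSupport (ρ k) := hcpt.of_isClosed_subset (isClosed_tsupport _)
      (closure_minimal (fun x hx => (hρs k x hx).2) hcpt.isClosed)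
    have hi' : Integrable fun x => ρ k x * ⟪D.F x, D.F x⟫ :=
      ((hρ k).continuous.mul continuous_inner_F).integrable_of_hasCompactSupport hρc.mul_right
    rw [heq, ← hmass, ← integral_const_mul]
    refine integral_mono (hi'.const_mul _) hi fun x => ?_
    by_cases hx : ρ k x = 0
    · simp [hx]
    · have h1 := (hR x (subset_closure (hsub k (hρs k x hx).2))
        (by linarith [(hρs k x hx).1])).2
      have h2 := mul_nonneg (hρ0 k x) h1
      simp only
      linarith
  have hl : Tendsto (fun δ : ℝ => -(C * δ) * ∫ x in D.Ω, coordTrace (D.H x)) (𝓝[>] 0) (𝓝 0) := by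
    have : Continuous fun δ : ℝ => -(C * δ) * ∫ x in D.Ω, coordTrace (D.H x) := by fun_prop
    simpa using (this.tendsto 0).mono_left nhdsWithin_le_nhds
  exact le_of_tendsto hl (by filter_upwards [self_mem_nhdsWithin] with δ hδ using key δ hδ)

end RobinConfig

/-- The Riesz representative of a linear form on Euclidean space, as a linear map. -/
noncomputable def riesz : (𝔼 →L[ℝ] ℝ) →L[ℝ] 𝔼 :=
  ∑ i : Fin n, (ContinuousLinearMap.apply ℝ ℝ (EuclideanSpace.single i (1 : ℝ))).smulRight
    (EuclideanSpace.single i (1 : ℝ))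

theorem riesz_apply_coord (l : 𝔼 →L[ℝ] ℝ) (i : Fin n) :
    riesz l i = l (EuclideanSpace.single i 1) := by
  simp [riesz, sum_apply, Pi.single_apply]

theorem inner_riesz (l : 𝔼 →L[ℝ] ℝ) (v : 𝔼) : ⟪riesz l, v⟫ = l v := by
  rw [PiLp.inner_apply, ← sum_clm_single_mul l v]
  simp [riesz_apply_coord, mul_comm]

theorem innerSL_riesz (l : 𝔼 →L[ℝ] ℝ) : innerSL ℝ (riesz l) = l := by
  ext v
  exact inner_riesz l v

theorem inner_gradient (u : 𝔼 → ℝ) (x v : 𝔼) : ⟪gradient u x, v⟫ = fderiv ℝ u x v := by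
  rw [gradient, InnerProductSpace.toDual_symm_apply]

end RobinBochner

/-- **Robin case with positive parameter.** Let `Ω ⊂ ℝⁿ` be a bounded
smooth convex domain, `β > 0`, and `u` a Robin eigenfunction: `Δu + ηu = 0` in `Ω`,
`∂_ν u + βu = 0` on `∂Ω`, normalized with `∫_Ω u² = 1`. Then `∫_Ω |D²u|² ≤ η²`. -/
theorem steklov_stmt_14 {n : ℕ} (hn : 2 ≤ n) (Ω : Set (EuclideanSpace ℝ (Fin n)))
    (hΩopen : IsOpen Ω) (hΩconv : Convex ℝ Ω) (hΩbd : Bornology.IsBounded Ω)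
    (hΩne : Ω.Nonempty) (hΩsm : HasSmoothBoundary Ω)
    (ν : EuclideanSpace ℝ (Fin n) → EuclideanSpace ℝ (Fin n))
    (hν : ∀ x ∈ frontier Ω, ‖ν x‖ = 1 ∧ ∀ y ∈ Ω, ⟪ν x, y - x⟫ ≤ 0)
    (u : EuclideanSpace ℝ (Fin n) → ℝ) (η β : ℝ) (hβ : 0 < β)
    (hu : ContDiffOn ℝ 2 u (closure Ω))
    (heig : ∀ x ∈ Ω, lap u x + η * u x = 0)
    (hbc : ∀ x ∈ frontier Ω, ⟪gradient u x, ν x⟫ + β * u x = 0)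
    (hnorm : (∫ x in Ω, (u x) ^ 2) = 1) :
    (∫ x in Ω, hessSq u x) ≤ η ^ 2 := by
  obtain ⟨f, hf, hΩf, hf0⟩ := hΩsm
  have hf2 : ContDiff ℝ 2 f := contDiff_infty.1 hf 2
  let K := closure Ω
  have hKu : UniqueDiffOn ℝ K := uniqueDiffOn_convex hΩconv.closure
    (hΩne.mono (interior_maximal subset_closure hΩopen))
  have hdf : ContDiff ℝ 1 (fderiv ℝ f) := hf2.fderiv_right (by norm_num)
  let F := fun x => riesz (fderiv ℝ f x)
  let U := fun x => riesz (fderivWithin ℝ u K x)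
  have hF : ∀ x, HasFDerivAt f (innerSL ℝ (F x)) x := fun x => by
    rw [innerSL_riesz]
    exact (hf2.differentiable (by simp) x).hasFDerivAt
  have hF1 : ContDiff ℝ 1 F := riesz.contDiff.comp hdf
  have hF2 : ∀ x, fderiv ℝ F x = riesz ∘L fderiv ℝ (fderiv ℝ f) x := fun x =>
    (riesz.hasFDerivAt.comp x (hdf.differentiable one_ne_zero x).hasFDerivAt).fderiv
  have hF0 : ∀ x ∈ frontier Ω, F x ≠ 0 := fun x hx h => hf0 x hx (by
    rw [← innerSL_riesz (fderiv ℝ f x), show riesz (fderiv ℝ f x) = 0 from h, map_zero])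
  have hFν : ∀ x ∈ frontier Ω, ‖F x‖ • ν x = F x := fun x hx =>
    unit_normal_eq hF hΩf (eq_zero_of_mem_frontier_sublevel hf.continuous hΩf hx) (hF0 x hx)
      (hν x hx).1 (hν x hx).2
  have hU : ContDiffOn ℝ 1 U K :=
    riesz.contDiff.comp_contDiffOn (hu.fderivWithin hKu (by norm_num))
  let D : RobinConfig n :=
    { Ω := Ω, f := f, F := F, H := fderiv ℝ F, u := u, U := U, A := fderivWithin ℝ U K, β := β
      isOpen := hΩopen
      isBounded := hΩbd
      eq_sublevel := hΩf
      contDiff_f := hf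
      hasFDerivAt_f := hF
      contDiff_F := hF1
      hasFDerivAt_F := fun x => (hF1.differentiable one_ne_zero x).hasFDerivAt
      symm_H := fun x v w => by
        have hs : IsSymmSndFDerivAt ℝ f x := hf2.contDiffAt.isSymmSndFDerivAt (by simp)
        have h : ∀ a b, ⟪fderiv ℝ F x a, b⟫ = fderiv ℝ (fderiv ℝ f) x a b := fun a b => by
          rw [hF2]
          exact inner_riesz _ _
        rw [real_inner_comm (fderiv ℝ F x w) v, h, h]
        exact hs v w
      F_ne_zero := hF0
      support := fun x hx y hy => by
        rw [← hFν x hx, real_inner_smul_left]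
        exact mul_nonpos_of_nonneg_of_nonpos (norm_nonneg _) ((hν x hx).2 y hy)
      hasFDerivWithinAt_u := fun x hx => by
        rw [innerSL_riesz]
        exact (hu.differentiableOn two_ne_zero x hx).hasFDerivWithinAt
      contDiffOn_u := (hu.of_le one_le_two).mono subset_closure
      contDiffOn_U := hU.mono subset_closure
      hasFDerivWithinAt_U := fun x hx =>
        (hU.differentiableOn one_ne_zero x hx).hasFDerivWithinAt
      continuousOn_A := hU.continuousOn_fderivWithin hKu le_rfl
      β_pos := hβ
      robin := fun x hx hQ => by
        have hxK : x ∈ K := frontier_subset_closure hx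
        have hb := hbc x hx
        rw [inner_gradient] at hb
        by_cases hd : DifferentiableAt ℝ u x
        · refine absurd ?_ hQ
          have h1 : ⟪F x, U x⟫ = ‖F x‖ * fderiv ℝ u x (ν x) := by
            conv_lhs => rw [← hFν x hx]
            rw [real_inner_smul_left, real_inner_comm, inner_riesz,
              hd.fderivWithin (hKu x hxK)]
          rw [h1, real_inner_self_eq_norm_sq, Real.sqrt_sq (norm_nonneg _)]
          linear_combination ‖F x‖ * hb
        · rw [fderiv_zero_of_not_differentiableAt hd] at hb
          simpa [hβ.ne'] using hb }
  have hJ := D.integral_J_nonneg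
  have hAe : ∀ x ∈ Ω, ∀ v i, D.A x v i
      = fderiv ℝ (fun y => fderiv ℝ u y (EuclideanSpace.single i 1)) x v := by
    intro x hx v i
    have hUx : HasFDerivAt U (D.A x) x := RobinConfig.hasFDerivAt_U (D := D) hx
    rw [← hUx.fderiv, ← fderiv_apply_coord hUx.differentiableAt]
    refine DFunLike.congr_fun (Filter.EventuallyEq.fderiv_eq ?_) v
    filter_upwards [hΩopen.mem_nhds hx] with y hy
    have hyK : K ∈ nhds y := mem_of_superset (hΩopen.mem_nhds hy) subset_closure
    simp only [U]
    rw [riesz_apply_coord, fderivWithin_of_mem_nhds hyK]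
  have hsymm : ∀ x ∈ Ω, ∀ i j : Fin n,
      fderiv ℝ (fun y => fderiv ℝ u y (EuclideanSpace.single i 1)) x (EuclideanSpace.single j 1)
      = fderiv ℝ (fun y => fderiv ℝ u y (EuclideanSpace.single j 1)) x
        (EuclideanSpace.single i 1) := by
    intro x hx i j
    have hux : ContDiffAt ℝ 2 u x :=
      hu.contDiffAt (mem_of_superset (hΩopen.mem_nhds hx) subset_closure)
    have hs : IsSymmSndFDerivAt ℝ u x := hux.isSymmSndFDerivAt (by simp)
    have hd : DifferentiableAt ℝ (fderiv ℝ u) x :=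
      (hux.fderiv_right (m := 1) (by norm_num)).differentiableAt one_ne_zero
    have h : ∀ w v : EuclideanSpace ℝ (Fin n),
        fderiv ℝ (fun y => fderiv ℝ u y w) x v = fderiv ℝ (fderiv ℝ u) x v w := fun w v => by
      rw [fderiv_clm_apply hd (differentiableAt_const w)]
      simp
    rw [h, h]
    exact hs _ _
  have hpt : ∀ x ∈ Ω, hessSq u x = η ^ 2 * u x ^ 2 - D.J x := by
    intro x hx
    have h1 : coordTrace (D.A x) = lap u x := by
      simp only [coordTrace, lap, hAe x hx]
    have h2 : hessSq u x = ∑ i : Fin n, ∑ j : Fin n,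
        D.A x (EuclideanSpace.single j 1) i * D.A x (EuclideanSpace.single i 1) j := by
      refine Finset.sum_congr rfl fun i _ => Finset.sum_congr rfl fun j _ => ?_
      rw [hAe x hx, hAe x hx, hsymm x hx j i, sq]
    have h3 : lap u x = -(η * u x) := by linarith [heig x hx]
    rw [RobinConfig.J, ← h2, h1, h3]
    ring
  have hiJ : IntegrableOn D.J Ω :=
    RobinConfig.integrableOn_of_continuousOn_closure (D := D) RobinConfig.continuousOn_J
  have hiu : IntegrableOn (fun x => η ^ 2 * u x ^ 2) Ω :=
    RobinConfig.integrableOn_of_continuousOn_closure (D := D)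
      (continuousOn_const.mul (hu.continuousOn.pow 2))
  rw [setIntegral_congr_fun hΩopen.measurableSet hpt, integral_sub hiu hiJ,
    integral_const_mul, hnorm]
  have : D.Ω = Ω := rfl
  rw [this] at hJ
  linarith
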